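/- Let T be a torsion class in mod Λ and M an indecomposable Λ-module not belonging to T such that every proper factor of M lies in T. Then (1) Filt(T ∪ {M}) is a torsion class, and (2) M is a brick. -/

import Mathlib

/-!
Common definitions: the category `mod Λ` of finite(-dimensional) left `Λ`-modules,
torsion(-free) classes, filtration closures, bricks, minimal (co-)extending modules,
and the lattice-theoretic notions for `tors Λ` (ordered by containment).
-/

/-- A bundled (left) `Λ`-module with carrier in `Type`. -/
structure Mdl (Λ : Type) [Ring Λ] : Type 1 where
  carrier : Type
  [isAddCommGroup : AddCommGroup carrier]
  [isModule : Module Λ carrier]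

attribute [instance] Mdl.isAddCommGroup Mdl.isModule

instance {Λ : Type} [Ring Λ] : CoeSort (Mdl Λ) Type :=
  ⟨Mdl.carrier⟩

variable (Λ : Type) [Ring Λ]

/-- Bundle a module. -/
def Mdl.of (X : Type) [AddCommGroup X] [Module Λ X] : Mdl Λ :=
  { carrier := X }

/-- `M` and `N` are isomorphic `Λ`-modules. -/
def MIso (M N : Mdl Λ) : Prop :=
  Nonempty (M.carrier ≃ₗ[Λ] N.carrier)

/-- `N` is a factor (quotient) module of `M`. -/
def IsFactor (M N : Mdl Λ) : Prop :=
  ∃ f : M.carrier →ₗ[Λ] N.carrier, Function.Surjective f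

/-- `N` is a proper factor of `M` (a quotient by a nonzero submodule). -/
def IsProperFactor (M N : Mdl Λ) : Prop :=
  ∃ f : M.carrier →ₗ[Λ] N.carrier, Function.Surjective f ∧ ¬ Function.Injective f

/-- `N` is (isomorphic to) a submodule of `M`. -/
def IsSubmoduleOf (N M : Mdl Λ) : Prop :=
  ∃ f : N.carrier →ₗ[Λ] M.carrier, Function.Injective f

/-- `N` is (isomorphic to) a proper submodule of `M`. -/
def IsProperSubmoduleOf (N M : Mdl Λ) : Prop :=
  ∃ f : N.carrier →ₗ[Λ] M.carrier, Function.Injective f ∧ ¬ Function.Surjective f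

/-- `D` is (isomorphic to) a direct summand of `N`. -/
def IsSummand (D N : Mdl Λ) : Prop :=
  ∃ (i : D.carrier →ₗ[Λ] N.carrier) (p : N.carrier →ₗ[Λ] D.carrier),
    p.comp i = LinearMap.id

/-- `0 → A --f--> M --g--> B → 0` is a short exact sequence. -/
def IsSES {A M B : Mdl Λ} (f : A.carrier →ₗ[Λ] M.carrier)
    (g : M.carrier →ₗ[Λ] B.carrier) : Prop :=
  Function.Injective f ∧ Function.Surjective g ∧ LinearMap.range f = LinearMap.ker g

/-- The short exact sequence `0 → A --f--> M --g--> B → 0` splits. -/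
def SplitsSES {A M B : Mdl Λ} (_f : A.carrier →ₗ[Λ] M.carrier)
    (g : M.carrier →ₗ[Λ] B.carrier) : Prop :=
  ∃ s : B.carrier →ₗ[Λ] M.carrier, g.comp s = LinearMap.id

/-- `M` is an extension of `B` by `A`, i.e. there is a s.e.s. `0 → A → M → B → 0`. -/
def ExtOf (M A B : Mdl Λ) : Prop :=
  ∃ (f : A.carrier →ₗ[Λ] M.carrier) (g : M.carrier →ₗ[Λ] B.carrier), IsSES Λ f g

/-- A torsion class in `mod Λ`: a class of finite(-dimensional) modules containing `0`
and closed under isomorphisms, factor modules and extensions. -/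
structure IsTorsionClass (T : Set (Mdl Λ)) : Prop where
  fin : ∀ M ∈ T, Module.Finite Λ M.carrier
  zero_mem : ∀ M : Mdl Λ, Subsingleton M.carrier → M ∈ T
  iso_closed : ∀ M ∈ T, ∀ N : Mdl Λ, MIso Λ M N → N ∈ T
  factor_closed : ∀ M ∈ T, ∀ N : Mdl Λ, IsFactor Λ M N → N ∈ T
  ext_closed : ∀ A ∈ T, ∀ B ∈ T, ∀ M : Mdl Λ, ExtOf Λ M A B → M ∈ T

/-- A torsion-free class in `mod Λ`: a class of finite(-dimensional) modules containing `0`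
and closed under isomorphisms, submodules and extensions. -/
structure IsTorsionFreeClass (F : Set (Mdl Λ)) : Prop where
  fin : ∀ M ∈ F, Module.Finite Λ M.carrier
  zero_mem : ∀ M : Mdl Λ, Subsingleton M.carrier → M ∈ F
  iso_closed : ∀ M ∈ F, ∀ N : Mdl Λ, MIso Λ M N → N ∈ F
  sub_closed : ∀ M ∈ F, ∀ N : Mdl Λ, IsSubmoduleOf Λ N M → N ∈ F
  ext_closed : ∀ A ∈ F, ∀ B ∈ F, ∀ M : Mdl Λ, ExtOf Λ M A B → M ∈ F

/-- `Filt S M`: `M` admits a filtration `0 = M₀ ⊆ M₁ ⊆ ⋯ ⊆ M_l = M` whose successive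
quotients are isomorphic to modules in `S`. -/
inductive Filt (S : Set (Mdl Λ)) : Mdl Λ → Prop
  | of_subsingleton (M : Mdl Λ) (h : Subsingleton M.carrier) : Filt S M
  | step (M : Mdl Λ) (N : Submodule Λ M.carrier) (X : Mdl Λ) (hX : X ∈ S)
      (hN : Filt S (Mdl.of Λ N)) (e : Nonempty ((M.carrier ⧸ N) ≃ₗ[Λ] X.carrier)) :
      Filt S M

/-- The filtration closure `Filt(S)` as a set of modules. -/
def FiltSet (S : Set (Mdl Λ)) : Set (Mdl Λ) := {M | Filt Λ S M}

/-- `Gen(M)`: the class of factor modules of finite direct sums of copies of `M`. -/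
def GenSet (M : Mdl Λ) : Set (Mdl Λ) :=
  {N | ∃ (n : ℕ) (f : (Fin n → M.carrier) →ₗ[Λ] N.carrier), Function.Surjective f}

/-- `T^⊥ = {X ∈ mod Λ : Hom_Λ(N, X) = 0 for all N ∈ T}`. -/
def Perp (T : Set (Mdl Λ)) : Set (Mdl Λ) :=
  {X | Module.Finite Λ X.carrier ∧ ∀ N ∈ T, ∀ f : N.carrier →ₗ[Λ] X.carrier, f = 0}

/-- A brick: a module (in `mod Λ`) whose endomorphism ring is a division ring,
i.e. it is nonzero and every nonzero endomorphism is invertible. -/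
def IsBrick (M : Mdl Λ) : Prop :=
  Module.Finite Λ M.carrier ∧ Nontrivial M.carrier ∧
    ∀ f : M.carrier →ₗ[Λ] M.carrier, f ≠ 0 → Function.Bijective f

/-- An indecomposable module: nonzero, and not the direct sum of two nonzero submodules. -/
def Indec (M : Mdl Λ) : Prop :=
  Nontrivial M.carrier ∧
    ∀ p q : Submodule Λ M.carrier, IsCompl p q → p = ⊥ ∨ q = ⊥

/-- `M` is a minimal extending module for the torsion class `T`:
(P1) every proper factor of `M` is in `T`;
(P2) if `0 → M → X → N → 0` is non-split exact with `N ∈ T`, then `X ∈ T`;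
(P3) `Hom_Λ(T, M) = 0`. -/
structure IsMinExt (T : Set (Mdl Λ)) (M : Mdl Λ) : Prop where
  fin : Module.Finite Λ M.carrier
  p1 : ∀ N : Mdl Λ, IsProperFactor Λ M N → N ∈ T
  p2 : ∀ (X N : Mdl Λ) (f : M.carrier →ₗ[Λ] X.carrier) (g : X.carrier →ₗ[Λ] N.carrier),
      IsSES Λ f g → ¬ SplitsSES Λ f g → N ∈ T → X ∈ T
  p3 : ∀ N ∈ T, ∀ f : N.carrier →ₗ[Λ] M.carrier, f = 0

/-- `M` is a minimal co-extending module for the torsion-free class `F`: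
(P1') every proper submodule of `M` is in `F`;
(P2') if `0 → F' → X → M → 0` is non-split exact with `F' ∈ F`, then `X ∈ F`;
(P3') `Hom_Λ(M, F) = 0`. -/
structure IsMinCoExt (F : Set (Mdl Λ)) (M : Mdl Λ) : Prop where
  fin : Module.Finite Λ M.carrier
  p1 : ∀ N : Mdl Λ, IsProperSubmoduleOf Λ N M → N ∈ F
  p2 : ∀ (X F' : Mdl Λ) (f : F'.carrier →ₗ[Λ] X.carrier) (g : X.carrier →ₗ[Λ] M.carrier),
      IsSES Λ f g → ¬ SplitsSES Λ f g → F' ∈ F → X ∈ F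
  p3 : ∀ F' ∈ F, ∀ f : M.carrier →ₗ[Λ] F'.carrier, f = 0

/-- `T'` covers `T` in the lattice `tors Λ` of torsion classes ordered by containment. -/
def TorsCovers (T' T : Set (Mdl Λ)) : Prop :=
  IsTorsionClass Λ T' ∧ IsTorsionClass Λ T ∧ T ⊂ T' ∧
    ∀ Y : Set (Mdl Λ), IsTorsionClass Λ Y → T ⊂ Y → Y ⊆ T' → Y = T'

/-- `F'` covers `F` in the lattice `torf Λ` of torsion-free classes ordered by containment. -/
def TorfCovers (F' F : Set (Mdl Λ)) : Prop :=
  IsTorsionFreeClass Λ F' ∧ IsTorsionFreeClass Λ F ∧ F ⊂ F' ∧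
    ∀ Y : Set (Mdl Λ), IsTorsionFreeClass Λ Y → F ⊂ Y → Y ⊆ F' → Y = F'

/-- The join `⋁ A` of a family of torsion classes in `tors Λ`: the smallest torsion
class containing all members of `A`. -/
def TorsJoin (A : Set (Set (Mdl Λ))) : Set (Mdl Λ) :=
  ⋂₀ {T : Set (Mdl Λ) | IsTorsionClass Λ T ∧ ∀ S ∈ A, S ⊆ T}

/-- A completely join-irreducible element of `tors Λ`: a torsion class `T` such that
`T ∈ A` whenever `A` is a set of torsion classes with `⋁ A = T`. -/
def CompletelyJoinIrred (T : Set (Mdl Λ)) : Prop :=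
  IsTorsionClass Λ T ∧
    ∀ A : Set (Set (Mdl Λ)), (∀ S ∈ A, IsTorsionClass Λ S) → TorsJoin Λ A = T → T ∈ A

/-- The join representation `⋁ A` is irredundant in `tors Λ`:
every proper subset has strictly smaller join. -/
def TorsIrredundant (A : Set (Set (Mdl Λ))) : Prop :=
  ∀ B : Set (Set (Mdl Λ)), B ⊂ A → TorsJoin Λ B ⊂ TorsJoin Λ A

/-- `A` is the canonical join representation of its join in `tors Λ` (equivalently, a face
of the canonical join complex `Γ(tors Λ)`): `⋁ A` is irredundant, and `A ≪ B` for every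
irredundant join representation `⋁ B` of the same element. -/
def TorsCJR (A : Set (Set (Mdl Λ))) : Prop :=
  (∀ S ∈ A, IsTorsionClass Λ S) ∧ TorsIrredundant Λ A ∧
    ∀ B : Set (Set (Mdl Λ)), (∀ S ∈ B, IsTorsionClass Λ S) →
      TorsJoin Λ B = TorsJoin Λ A → TorsIrredundant Λ B → ∀ a ∈ A, ∃ b ∈ B, a ⊆ b

/-- `M` and `N` are hom-orthogonal: `Hom_Λ(M, N) = 0` and `Hom_Λ(N, M) = 0`. -/
def HomOrthogonal (M N : Mdl Λ) : Prop :=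
  (∀ f : M.carrier →ₗ[Λ] N.carrier, f = 0) ∧ ∀ f : N.carrier →ₗ[Λ] M.carrier, f = 0

/-!
The class `Filt(S)` is closed under extensions because a filtration of the quotient pulls back to
one of the middle term above the submodule. Filtrations also push forward along surjections, with
successive quotients that are factors of the original ones, so `Filt(S)` is a torsion class once the
factors of members of `S` lie in `Filt(S)`. For `S = T ∪ {M}` this is immediate, as every factor of
`M` is isomorphic to `M` or proper.

A nonzero non-injective endomorphism `f` of `M` would present `M` as an extension of `M / im f` by
`im f`. Both are proper factors of `M`, so `M` would lie in `T`. Hence every nonzero endomorphism is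
injective, and therefore bijective since `M` is Artinian.
-/

section

variable {Λ}

namespace Filt

variable {S : Set (Mdl Λ)} {A B E M : Mdl Λ}

theorem of_equiv (hA : Filt Λ S A) (e : A.carrier ≃ₗ[Λ] B.carrier) : Filt Λ S B := by
  induction hA generalizing B with
  | of_subsingleton _ hA => exact .of_subsingleton B e.symm.injective.subsingleton
  | step A N X hX _ hquot ih =>
    obtain ⟨eX⟩ := hquot
    exact .step B (N.map (e : A.carrier →ₗ[Λ] B.carrier)) X hX (ih (e.submoduleMap N))
      ⟨(Submodule.Quotient.equiv N _ e rfl).symm.trans eX⟩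

theorem of_mem (hM : M ∈ S) : Filt Λ S M :=
  .step M ⊥ M hM (.of_subsingleton _ (inferInstanceAs (Subsingleton (⊥ : Submodule Λ M.carrier))))
    ⟨Submodule.quotEquivOfEqBot ⊥ rfl⟩

theorem of_ker (g : E.carrier →ₗ[Λ] B.carrier) (hg : Function.Surjective g)
    (hker : Filt Λ S (Mdl.of Λ (LinearMap.ker g))) (hB : Filt Λ S B) : Filt Λ S E := by
  induction hB generalizing E with
  | of_subsingleton _ _ =>
    exact hker.of_equiv (LinearEquiv.ofTop _ (LinearMap.ker_eq_top.2 (Subsingleton.elim _ _)))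
  | step B N X hX _ hquot ih =>
    obtain ⟨eX⟩ := hquot
    let gN : N.comap g →ₗ[Λ] N := g.restrict fun _ hx => hx
    have hgN : Function.Surjective gN := fun ⟨b, hb⟩ => by
      obtain ⟨x, rfl⟩ := hg b
      exact ⟨⟨x, hb⟩, rfl⟩
    let kerEquiv : LinearMap.ker g ≃ₗ[Λ] LinearMap.ker gN :=
      (Submodule.comapSubtypeEquivOfLe (LinearMap.ker_le_comap g)).symm.trans
        (LinearEquiv.ofEq _ _ (LinearMap.ker_restrict _).symm)
    have comap_eq_ker : N.comap g = LinearMap.ker (N.mkQ ∘ₗ g) := by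
      rw [LinearMap.ker_comp, Submodule.ker_mkQ]
    let quotEquiv : (E.carrier ⧸ N.comap g) ≃ₗ[Λ] B.carrier ⧸ N :=
      (Submodule.quotEquivOfEq _ _ comap_eq_ker).trans
        ((N.mkQ ∘ₗ g).quotKerEquivOfSurjective (N.mkQ_surjective.comp hg))
    exact .step E (N.comap g) X hX
      (ih (E := Mdl.of Λ (N.comap g)) gN hgN (hker.of_equiv kerEquiv)) ⟨quotEquiv.trans eX⟩

theorem of_submodule_of_quotient (N : Submodule Λ M.carrier) (hN : Filt Λ S (Mdl.of Λ N))
    (hquot : Filt Λ S (Mdl.of Λ (M.carrier ⧸ N))) : Filt Λ S M :=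
  of_ker (B := Mdl.of Λ (M.carrier ⧸ N)) N.mkQ N.mkQ_surjective
    (hN.of_equiv (LinearEquiv.ofEq _ _ N.ker_mkQ.symm)) hquot

theorem of_extOf (hE : ExtOf Λ E A B) (hA : Filt Λ S A) (hB : Filt Λ S B) : Filt Λ S E := by
  obtain ⟨f, g, hf, hg, hfg⟩ := hE
  exact of_ker g hg
    (hA.of_equiv ((LinearEquiv.ofInjective f hf).trans (LinearEquiv.ofEq _ _ hfg))) hB

theorem of_isFactor (hS : ∀ X ∈ S, ∀ Y : Mdl Λ, IsFactor Λ X Y → Filt Λ S Y)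
    (hA : Filt Λ S A) (hAB : IsFactor Λ A B) : Filt Λ S B := by
  induction hA generalizing B with
  | of_subsingleton A _ =>
    obtain ⟨f, hf⟩ := hAB
    exact .of_subsingleton B hf.subsingleton
  | step A N X hX _ hquot ih =>
    obtain ⟨eX⟩ := hquot
    obtain ⟨f, hf⟩ := hAB
    let fquot : (A.carrier ⧸ N) →ₗ[Λ] B.carrier ⧸ N.map f :=
      N.mapQ (N.map f) f (N.le_comap_map f)
    have hfquot : Function.Surjective fquot :=
      .of_comp (g := N.mkQ) ((N.map f).mkQ_surjective.comp hf)
    exact of_submodule_of_quotient (N.map f)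
      (ih ⟨f.submoduleMap N, f.submoduleMap_surjective N⟩)
      (hS X hX _ ⟨fquot ∘ₗ eX.symm, hfquot.comp eX.symm.surjective⟩)

theorem finite (hS : ∀ X ∈ S, Module.Finite Λ X.carrier) (hM : Filt Λ S M) :
    Module.Finite Λ M.carrier := by
  induction hM with
  | of_subsingleton M _ => infer_instance
  | step M N X hX _ hquot ih =>
    obtain ⟨eX⟩ := hquot
    have : Module.Finite Λ X.carrier := hS X hX
    have : Module.Finite Λ (M.carrier ⧸ N) := .equiv eX.symm
    have : Module.Finite Λ N := ih
    exact .of_submodule_quotient N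

end Filt

theorem isTorsionClass_filtSet {S : Set (Mdl Λ)} (hfin : ∀ X ∈ S, Module.Finite Λ X.carrier)
    (hfac : ∀ X ∈ S, ∀ Y : Mdl Λ, IsFactor Λ X Y → Y ∈ FiltSet Λ S) :
    IsTorsionClass Λ (FiltSet Λ S) where
  fin _ := Filt.finite hfin
  zero_mem := Filt.of_subsingleton
  iso_closed _ hM _ := fun ⟨e⟩ => Filt.of_equiv hM e
  factor_closed _ hM _ := Filt.of_isFactor hfac hM
  ext_closed _ hA _ hB _ hE := Filt.of_extOf hE hA hB

namespace IsTorsionClass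

variable {T : Set (Mdl Λ)} {M N : Mdl Λ}

theorem mem_of_submodule_of_quotient (hT : IsTorsionClass Λ T) (P : Submodule Λ M.carrier)
    (hP : Mdl.of Λ P ∈ T) (hquot : Mdl.of Λ (M.carrier ⧸ P) ∈ T) : M ∈ T :=
  hT.ext_closed _ hP _ hquot M
    ⟨P.subtype, P.mkQ, P.subtype_injective, P.mkQ_surjective,
      P.range_subtype.trans P.ker_mkQ.symm⟩

theorem filtSet_insert (hT : IsTorsionClass Λ T) (hMfin : Module.Finite Λ M.carrier)
    (hfac : ∀ Y : Mdl Λ, IsProperFactor Λ M Y → Y ∈ T) :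
    IsTorsionClass Λ (FiltSet Λ (insert M T)) := by
  refine isTorsionClass_filtSet (Set.forall_mem_insert.2 ⟨hMfin, hT.fin⟩)
    (Set.forall_mem_insert.2 ⟨?_, fun X hX Y hXY =>
      Filt.of_mem (Set.mem_insert_of_mem M (hT.factor_closed X hX Y hXY))⟩)
  rintro Y ⟨g, hg⟩
  by_cases hinj : Function.Injective g
  · exact (Filt.of_mem (Set.mem_insert M T)).of_equiv (.ofBijective g ⟨hinj, hg⟩)
  · exact Filt.of_mem (Set.mem_insert_of_mem M (hfac Y ⟨g, hg, hinj⟩))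

theorem injective_of_ne_zero (hT : IsTorsionClass Λ T)
    (hMfac : ∀ Y : Mdl Λ, IsProperFactor Λ M Y → Y ∈ T)
    (hNfac : ∀ Y : Mdl Λ, IsProperFactor Λ N Y → Y ∈ T) (hN : N ∉ T)
    {f : M.carrier →ₗ[Λ] N.carrier} (hf : f ≠ 0) : Function.Injective f := by
  by_contra hinj
  refine hN (hT.mem_of_submodule_of_quotient (LinearMap.range f) (hMfac _ ?_) (hNfac _ ?_))
  · exact ⟨f.rangeRestrict, f.surjective_rangeRestrict,
      fun h => hinj (f.injective_rangeRestrict_iff.1 h)⟩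
  · refine ⟨(LinearMap.range f).mkQ, Submodule.mkQ_surjective _, fun h => hf ?_⟩
    rw [← LinearMap.range_eq_bot, ← (LinearMap.range f).ker_mkQ]
    exact LinearMap.ker_eq_bot.2 h

theorem isBrick (hT : IsTorsionClass Λ T) (hMfin : Module.Finite Λ M.carrier)
    [IsArtinian Λ M.carrier] (hM : M ∉ T)
    (hfac : ∀ Y : Mdl Λ, IsProperFactor Λ M Y → Y ∈ T) : IsBrick Λ M :=
  ⟨hMfin, not_subsingleton_iff_nontrivial.1 fun h => hM (hT.zero_mem M h), fun f hf =>
    IsArtinian.bijective_of_injective_endomorphism f (hT.injective_of_ne_zero hfac hfac hM hf)⟩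

end IsTorsionClass

theorem statement6_general {T : Set (Mdl Λ)} (hT : IsTorsionClass Λ T) {M : Mdl Λ}
    (hMfin : Module.Finite Λ M.carrier) [IsArtinian Λ M.carrier] (hM : M ∉ T)
    (hfac : ∀ N : Mdl Λ, IsProperFactor Λ M N → N ∈ T) :
    IsTorsionClass Λ (FiltSet Λ (insert M T)) ∧ IsBrick Λ M :=
  ⟨hT.filtSet_insert hMfin hfac, hT.isBrick hMfin hM hfac⟩

end

/-- Let `T` be a torsion class in `mod Λ` and `M` an indecomposable
module not in `T` all of whose proper factors lie in `T`. Then (1) `Filt(T ∪ {M})` is a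
torsion class, and (2) `M` is a brick. -/
theorem statement6 (k : Type) [Field k] (Λ : Type) [Ring Λ] [Algebra k Λ]
    [FiniteDimensional k Λ] (T : Set (Mdl Λ)) (hT : IsTorsionClass Λ T)
    (M : Mdl Λ) (hMfin : Module.Finite Λ M.carrier) (hMindec : Indec Λ M)
    (hMnotmem : M ∉ T) (hfac : ∀ N : Mdl Λ, IsProperFactor Λ M N → N ∈ T) :
    IsTorsionClass Λ (FiltSet Λ (insert M T)) ∧ IsBrick Λ M := by
  have : IsArtinianRing Λ := IsArtinianRing.of_finite k Λ
  exact statement6_general hT hMfin hMnotmem hfac
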